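/- Let δ > 0, let ℓ ≥ 1, and let r₁,…,r_ℓ and s₁,…,s_ℓ be non-negative integers with r_i ≥ s_i for each i. Let r = |E(K(r₁,…,r_ℓ))| and s = |E(K(s₁,…,s_ℓ))|. Then there exists ρ > 0 and n₀ such that for every d ∈ (0,1] and every (ρ,d)-dense graph G with at least n₀ vertices, t_{K(r₁,…,r_ℓ)}(G) ≥ (d^{r−s} − δ) · t_{K(s₁,…,s_ℓ)}(G). -/

import Mathlib

open MeasureTheory

/-- The homomorphism density `t_H(G)`. -/
noncomputable def homDensity {α β : Type*} [Fintype α] [Fintype β]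
    (H : SimpleGraph α) (G : SimpleGraph β) : ℝ :=
  (Nat.card (H →g G) : ℝ) / (Fintype.card β : ℝ) ^ (Fintype.card α)

/-- The number of edges of a graph. -/
noncomputable def edgeCount {α : Type*} (H : SimpleGraph α) : ℕ :=
  Nat.card H.edgeSet

/-- `G` is `(ρ,d)`-dense: every vertex subset `X` with `|X| ≥ ρ|V(G)|`
spans at least `(d/2)|X|²` edges. -/
def LocallyDense {β : Type*} [Fintype β] (G : SimpleGraph β) (ρ d : ℝ) : Prop :=
  ∀ X : Finset β, ρ * (Fintype.card β : ℝ) ≤ (X.card : ℝ) →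
    d / 2 * (X.card : ℝ) ^ 2 ≤
      (Nat.card {e : Sym2 β // e ∈ G.edgeSet ∧ ∀ v ∈ e, v ∈ X} : ℝ)

/-! A homomorphism from the join `H ∨ I_k` to `G` is a homomorphism `φ` from `H` together with `k`
common neighbours of its image, so `hom(H ∨ I_k, G) = ∑ φ, |N(φ)| ^ k`. By Chebyshev's sum
inequality, a bound `c * hom(H, G) ≤ hom(H ∨ I_1, G)` persists as
`c * hom(H ∨ I_k, G) ≤ hom(H ∨ I_{k+1}, G)`. Local density inside each `N(φ)` and the power mean
inequality show in addition that a vertex joined to all of `H ∨ I_k` costs only a further factor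
`d ^ k`, up to an error `ρ`. Hence, by induction on the number of parts, a vertex joined to all of
`K(r₁, …, r_ℓ)` costs a factor `d ^ (r₁ + ⋯ + r_ℓ) - ℓ * ρ`. Enlarging the `i`-th part by one
vertex therefore costs `d` to the number of vertices outside that part, which is the number of
edges gained, and one passes from `K(s₁, …, s_ℓ)` to `K(r₁, …, r_ℓ)` one vertex at a time. -/

open Finset Function

theorem mul_sub_add_mul_le_of_le_of_le {a b x y t u v : ℝ} (hb : 0 ≤ b) (hb1 : b ≤ 1)
    (hx : 0 ≤ x) (hy : 0 ≤ y) (ht : 0 ≤ t) (hut : u ≤ t) (hu : (a - x) * t ≤ u)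
    (hv : (b - y) * u ≤ v) : (a * b - (x + y)) * t ≤ v :=
  calc (a * b - (x + y)) * t
      ≤ (a * b - (b * x + y)) * t := by
        gcongr
        exact mul_le_of_le_one_left hx hb1
    _ = b * ((a - x) * t) - y * t := by ring
    _ ≤ b * u - y * u := by gcongr
    _ = (b - y) * u := by ring
    _ ≤ v := hv

section UnitIncrement

variable {ι : Type*} [DecidableEq ι]

theorem exists_eq_update_add_one_of_covBy {s r : ι → ℕ} (h : s ⋖ r) :
    ∃ i, r = update s i (s i + 1) := by
  obtain ⟨i, x, hx, rfl⟩ := Pi.covBy_iff_exists_right_eq.1 h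
  exact ⟨i, by rw [Order.covBy_iff_add_one_eq.1 hx]⟩

theorem sum_update_add_one_sub [Fintype ι] (r s : ι → ℕ) (i : ι) :
    ∑ j, ((update r i (r i + 1) j : ℝ) - s j) = ∑ j, ((r j : ℝ) - s j) + 1 := by
  calc ∑ j, ((update r i (r i + 1) j : ℝ) - s j)
      = ∑ j, ((r j : ℝ) - s j + if j = i then 1 else 0) := by
        refine sum_congr rfl fun j _ => ?_
        rcases eq_or_ne j i with rfl | hj
        · simp only [update_self, if_true]
          push_cast
          ring
        · simp [hj]
    _ = ∑ j, ((r j : ℝ) - s j) + 1 := by simp [sum_add_distrib]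

end UnitIncrement

section IndependentJoin

variable {α β : Type*}

/-- The number of homomorphisms from `H` to `G`, as a real number: the numerator of `t_H(G)`. -/
noncomputable def homCount (H : SimpleGraph α) (G : SimpleGraph β) : ℝ :=
  Nat.card (H →g G)

/-- The join `H ∨ I_k` of `H` with an independent set of `k` new vertices. Adding a part of size `k`
to a complete multipartite graph is such a join, and so is adding a vertex joined to all of `H`
(`k = 1`). -/
def indepJoin (H : SimpleGraph α) (k : ℕ) : SimpleGraph (α ⊕ Fin k) :=
  (H ⊕g ⊥) ⊔ completeBipartiteGraph α (Fin k)

@[simp]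
theorem indepJoin_adj_inl_inl {H : SimpleGraph α} {k : ℕ} {a b : α} :
    (indepJoin H k).Adj (.inl a) (.inl b) ↔ H.Adj a b := by
  simp [indepJoin]

@[simp]
theorem indepJoin_adj_inl_inr {H : SimpleGraph α} {k : ℕ} {a : α} {x : Fin k} :
    (indepJoin H k).Adj (.inl a) (.inr x) := by
  simp [indepJoin]

@[simp]
theorem indepJoin_adj_inr_inl {H : SimpleGraph α} {k : ℕ} {a : α} {x : Fin k} :
    (indepJoin H k).Adj (.inr x) (.inl a) := by
  simp [indepJoin]

@[simp]
theorem not_indepJoin_adj_inr_inr {H : SimpleGraph α} {k : ℕ} {x y : Fin k} :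
    ¬ (indepJoin H k).Adj (.inr x) (.inr y) := by
  simp [indepJoin]

theorem edgeCount_congr {γ : Type*} {H : SimpleGraph α} {K : SimpleGraph γ} (e : H ≃g K) :
    edgeCount H = edgeCount K :=
  Nat.card_congr e.mapEdgeSet

theorem edgeCount_indepJoin [Fintype α] (H : SimpleGraph α) (k : ℕ) :
    edgeCount (indepJoin H k) = edgeCount H + Fintype.card α * k := by
  have edges_sum : (H ⊕g (⊥ : SimpleGraph (Fin k))).edgeSet.ncard = edgeCount H := by
    rw [← Nat.card_coe_set_eq, Nat.card_congr SimpleGraph.edgeSetSumEquiv, Nat.card_sum]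
    simp [edgeCount]
  have edges_bipartite :
      (completeBipartiteGraph α (Fin k)).edgeSet.ncard = Fintype.card α * k := by
    simp [Set.ncard, SimpleGraph.encard_edgeSet_completeBipartiteGraph]
  have disjoint_edges :
      Disjoint (H ⊕g (⊥ : SimpleGraph (Fin k))).edgeSet
        (completeBipartiteGraph α (Fin k)).edgeSet := by
    rw [Set.disjoint_left, Sym2.forall]
    rintro (a | x) (b | y) <;> simp
  rw [edgeCount, indepJoin, SimpleGraph.edgeSet_sup, Nat.card_coe_set_eq,
    Set.ncard_union_eq disjoint_edges, edges_sum, edges_bipartite]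

/-- Joining two independent sets commutes, so that the set joined last may be embedded first. -/
def indepJoinComm (H : SimpleGraph α) (k m : ℕ) :
    indepJoin (indepJoin H k) m ≃g indepJoin (indepJoin H m) k where
  toEquiv := (Equiv.sumAssoc ..).trans
    ((Equiv.sumCongr (.refl α) (.sumComm ..)).trans (Equiv.sumAssoc ..).symm)
  map_rel_iff' := by rintro ((a | x) | y) ((b | z) | w) <;> simp

/-- Functoriality of `H ∨ I_k` in `H`, for isomorphisms. -/
def indepJoinCongr {γ : Type*} {H : SimpleGraph α} {K : SimpleGraph γ} (e : H ≃g K) (k : ℕ) :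
    indepJoin H k ≃g indepJoin K k where
  toEquiv := .sumCongr e.toEquiv (.refl _)
  map_rel_iff' := by rintro (a | x) (b | y) <;> simp [e.map_adj_iff]

theorem homCount_nonneg (H : SimpleGraph α) (G : SimpleGraph β) : 0 ≤ homCount H G :=
  Nat.cast_nonneg _

theorem homCount_congr {γ : Type*} {H : SimpleGraph α} {K : SimpleGraph γ} (e : H ≃g K)
    (G : SimpleGraph β) : homCount H G = homCount K G :=
  congrArg _ <| Nat.card_congr
    ⟨fun φ => φ.comp e.symm.toHom, fun φ => φ.comp e.toHom, fun φ => by ext; simp,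
      fun φ => by ext; simp⟩

variable [Fintype β]

open Classical in
/-- The common neighbourhood of the vertices `f a`, the set of images that are available for a new
vertex joined to all of the `a`. -/
noncomputable def commonNbrs (G : SimpleGraph β) (f : α → β) : Finset β :=
  {v | ∀ a, G.Adj (f a) v}

@[simp]
theorem mem_commonNbrs {G : SimpleGraph β} {f : α → β} {v : β} :
    v ∈ commonNbrs G f ↔ ∀ a, G.Adj (f a) v := by
  simp [commonNbrs]

/-- A homomorphism from `H ∨ I_k` consists of one from `H` and of an independent choice, for each of
the `k` new vertices, of a common neighbour of the image of `H`. -/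
def indepJoinHomEquiv (H : SimpleGraph α) (k : ℕ) (G : SimpleGraph β) :
    (indepJoin H k →g G) ≃ Σ φ : H →g G, Fin k → commonNbrs G φ where
  toFun ψ :=
    ⟨⟨fun a => ψ (.inl a), fun h => ψ.map_rel (by simpa using h)⟩,
      fun x => ⟨ψ (.inr x), mem_commonNbrs.2 fun _ => ψ.map_rel (by simp)⟩⟩
  invFun p :=
    ⟨Sum.elim p.1 fun x => p.2 x, by
      rintro (a | x) (b | y) h
      · exact p.1.map_rel (by simpa using h)
      · exact mem_commonNbrs.1 (p.2 y).2 a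
      · exact (mem_commonNbrs.1 (p.2 x).2 b).symm
      · simp at h⟩
  left_inv ψ := by ext (a | x) <;> rfl
  right_inv p := rfl

theorem homCount_indepJoin (H : SimpleGraph α) (k : ℕ) (G : SimpleGraph β) [Fintype (H →g G)] :
    homCount (indepJoin H k) G = ∑ φ : H →g G, (#(commonNbrs G φ) : ℝ) ^ k := by
  rw [homCount, Nat.card_congr (indepJoinHomEquiv H k G), Nat.card_sigma]
  simp only [Nat.card_eq_fintype_card, Fintype.card_fun, Fintype.card_coe, Fintype.card_fin]
  push_cast
  rfl

theorem homCount_indepJoin_succ_le [Finite α] (H : SimpleGraph α) (k : ℕ) (G : SimpleGraph β) :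
    homCount (indepJoin H (k + 1)) G ≤ Fintype.card β * homCount (indepJoin H k) G := by
  have := Fintype.ofFinite (H →g G)
  simp only [homCount_indepJoin, mul_sum, pow_succ']
  gcongr
  exact card_le_univ _

theorem homCount_indepJoin_one_of_isEmpty [IsEmpty α] (H : SimpleGraph α) (G : SimpleGraph β) :
    homCount (indepJoin H 1) G = Fintype.card β * homCount H G := by
  have := Fintype.ofFinite (H →g G)
  have commonNbrs_eq : ∀ φ : H →g G, commonNbrs G φ = univ := fun φ => by ext; simp
  rw [homCount_indepJoin]
  simp [commonNbrs_eq, homCount]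

open Classical in
theorem homCount_indepJoin_indepJoin_one (H : SimpleGraph α) (k : ℕ) (G : SimpleGraph β)
    [Finite α] [Fintype (H →g G)] :
    homCount (indepJoin (indepJoin H k) 1) G =
      ∑ φ : H →g G, ∑ v ∈ commonNbrs G φ, (#{w ∈ commonNbrs G φ | G.Adj v w} : ℝ) ^ k := by
  have := Fintype.ofFinite (indepJoin H 1 →g G)
  have commonNbrs_symm : ∀ (φ : H →g G) (g : Fin 1 → commonNbrs G φ),
      commonNbrs G ((indepJoinHomEquiv H 1 G).symm ⟨φ, g⟩) =
        {w ∈ commonNbrs G φ | G.Adj (g 0) w} := fun φ g => by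
    ext w
    rw [mem_commonNbrs, mem_filter, mem_commonNbrs, Sum.forall, Fin.forall_fin_one]
    rfl
  rw [homCount_congr (indepJoinComm H k 1), homCount_indepJoin,
    ← (indepJoinHomEquiv H 1 G).symm.sum_comp, Fintype.sum_sigma]
  refine sum_congr rfl fun φ _ => ?_
  simp only [commonNbrs_symm]
  rw [← (Equiv.funUnique (Fin 1) (commonNbrs G φ)).symm.sum_comp]
  exact sum_coe_sort (commonNbrs G φ) fun v => (#{w ∈ commonNbrs G φ | G.Adj v w} : ℝ) ^ k

end IndependentJoin

section Chebyshev

variable {α β : Type*} [Finite α] [Finite β]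

theorem homCount_indepJoin_mul_le (H : SimpleGraph α) (k : ℕ) (G : SimpleGraph β) :
    homCount (indepJoin H k) G * homCount (indepJoin H 1) G ≤
      homCount H G * homCount (indepJoin H (k + 1)) G := by
  have := Fintype.ofFinite β
  have := Fintype.ofFinite (H →g G)
  have monovary_pow : Monovary (fun φ : H →g G => (#(commonNbrs G φ) : ℝ) ^ k)
      (fun φ => (#(commonNbrs G φ) : ℝ)) :=
    (monovary_self _).pow_left₀ (fun _ => Nat.cast_nonneg _) k
  have chebyshev := monovary_pow.sum_mul_sum_le_card_mul_sum
  simp only [← pow_succ] at chebyshev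
  simpa only [homCount_indepJoin, pow_one, homCount.eq_1 H, Nat.card_eq_fintype_card]

theorem homCount_indepJoin_eq_zero {H : SimpleGraph α} {G : SimpleGraph β}
    (h : homCount H G = 0) (k : ℕ) : homCount (indepJoin H k) G = 0 := by
  have := Fintype.ofFinite β
  have := Fintype.ofFinite (H →g G)
  have : IsEmpty (H →g G) := by
    simpa [homCount, Fintype.card_eq_zero_iff] using h
  simp [homCount_indepJoin]

theorem mul_homCount_indepJoin_le {H : SimpleGraph α} {G : SimpleGraph β} {c : ℝ}
    (hc : c * homCount H G ≤ homCount (indepJoin H 1) G) (k : ℕ) :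
    c * homCount (indepJoin H k) G ≤ homCount (indepJoin H (k + 1)) G := by
  rcases (homCount_nonneg H G).eq_or_lt with h | h
  · simp [homCount_indepJoin_eq_zero h.symm]
  · refine le_of_mul_le_mul_left ?_ h
    calc homCount H G * (c * homCount (indepJoin H k) G)
        = homCount (indepJoin H k) G * (c * homCount H G) := by ring
      _ ≤ homCount (indepJoin H k) G * homCount (indepJoin H 1) G := by
          gcongr; exact homCount_nonneg _ _
      _ ≤ homCount H G * homCount (indepJoin H (k + 1)) G := homCount_indepJoin_mul_le H k G

end Chebyshev

section Density

variable {α β : Type*} [Fintype α] [Fintype β]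

theorem homDensity_eq_homCount_div (H : SimpleGraph α) (G : SimpleGraph β) :
    homDensity H G = homCount H G / (Fintype.card β : ℝ) ^ Fintype.card α :=
  rfl

theorem homDensity_nonneg (H : SimpleGraph α) (G : SimpleGraph β) : 0 ≤ homDensity H G :=
  div_nonneg (homCount_nonneg H G) (by positivity)

theorem homDensity_congr {γ : Type*} [Fintype γ] {H : SimpleGraph α} {K : SimpleGraph γ}
    (e : H ≃g K) (G : SimpleGraph β) : homDensity H G = homDensity K G := by
  rw [homDensity_eq_homCount_div, homDensity_eq_homCount_div, homCount_congr e,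
    Fintype.card_congr e.toEquiv]

variable [Nonempty β]

theorem homDensity_indepJoin_succ_le (H : SimpleGraph α) (k : ℕ) (G : SimpleGraph β) :
    homDensity (indepJoin H (k + 1)) G ≤ homDensity (indepJoin H k) G := by
  have extend := homCount_indepJoin_succ_le H k G
  simp only [homDensity_eq_homCount_div, Fintype.card_sum, Fintype.card_fin, ← add_assoc, pow_succ]
  rw [div_le_div_iff₀ (by positivity) (by positivity)]
  calc homCount (indepJoin H (k + 1)) G * (Fintype.card β : ℝ) ^ (Fintype.card α + k)
      ≤ Fintype.card β * homCount (indepJoin H k) G *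
          (Fintype.card β : ℝ) ^ (Fintype.card α + k) := by gcongr
    _ = homCount (indepJoin H k) G *
          ((Fintype.card β : ℝ) ^ (Fintype.card α + k) * Fintype.card β) := by ring

theorem mul_homDensity_indepJoin_le {H : SimpleGraph α} {G : SimpleGraph β} {c : ℝ}
    (hc : c * Fintype.card β * homCount H G ≤ homCount (indepJoin H 1) G) (k : ℕ) :
    c * homDensity (indepJoin H k) G ≤ homDensity (indepJoin H (k + 1)) G := by
  have extend := mul_homCount_indepJoin_le hc k
  simp only [homDensity_eq_homCount_div, Fintype.card_sum, Fintype.card_fin, ← add_assoc, pow_succ]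
  rw [← mul_div_assoc, div_le_div_iff₀ (by positivity) (by positivity)]
  calc c * homCount (indepJoin H k) G *
        ((Fintype.card β : ℝ) ^ (Fintype.card α + k) * Fintype.card β)
      = c * Fintype.card β * homCount (indepJoin H k) G *
          (Fintype.card β : ℝ) ^ (Fintype.card α + k) := by ring
    _ ≤ homCount (indepJoin H (k + 1)) G * (Fintype.card β : ℝ) ^ (Fintype.card α + k) := by
        gcongr

end Density

open Classical in
theorem two_mul_card_edges_within {β : Type*} [Finite β] (G : SimpleGraph β) (X : Finset β) :
    2 * Nat.card {e : Sym2 β // e ∈ G.edgeSet ∧ ∀ v ∈ e, v ∈ X} =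
      ∑ v ∈ X, #{w ∈ X | G.Adj v w} := by
  have := Fintype.ofFinite β
  obtain ⟨K, adj_iff⟩ : ∃ K : SimpleGraph β, ∀ v w, K.Adj v w ↔ v ∈ X ∧ w ∈ X ∧ G.Adj v w :=
    ⟨⟨fun v w => v ∈ X ∧ w ∈ X ∧ G.Adj v w, ⟨fun _ _ h => ⟨h.2.1, h.1, h.2.2.symm⟩⟩,
      ⟨fun _ h => G.irrefl h.2.2⟩⟩, fun _ _ => Iff.rfl⟩
  have degree_eq : ∀ v, K.degree v = if v ∈ X then #{w ∈ X | G.Adj v w} else 0 := fun v => by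
    rw [← SimpleGraph.card_neighborFinset_eq_degree, SimpleGraph.neighborFinset_eq_filter]
    split_ifs with hv
    · congr 1
      ext w
      simp [adj_iff, hv]
    · simp [adj_iff, hv]
  have card_edges :
      Nat.card {e : Sym2 β // e ∈ G.edgeSet ∧ ∀ v ∈ e, v ∈ X} = Nat.card K.edgeSet := by
    refine Nat.card_congr (Equiv.subtypeEquivRight (Sym2.ind fun v w => ?_))
    simp only [SimpleGraph.mem_edgeSet, Sym2.forall_mem_pair, adj_iff]
    tauto
  have handshake := K.sum_degrees_eq_twice_card_edges
  rw [SimpleGraph.edgeFinset_card, ← Nat.card_eq_fintype_card] at handshake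
  rw [card_edges, ← handshake]
  simp only [degree_eq, sum_ite_mem, univ_inter]

namespace LocallyDense

variable {α β : Type*} [Fintype β] {G : SimpleGraph β} {ρ d : ℝ}

open Classical in
theorem mul_card_sq_le_sum_card (hG : LocallyDense G ρ d) {X : Finset β}
    (hX : ρ * Fintype.card β ≤ #X) :
    d * (#X : ℝ) ^ 2 ≤ ∑ v ∈ X, (#{w ∈ X | G.Adj v w} : ℝ) := by
  have handshake := congrArg (Nat.cast (R := ℝ)) (two_mul_card_edges_within G X)
  push_cast at handshake
  have dense := hG X hX
  linarith

open Classical in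
theorem mul_sub_le_sum_card_pow (hG : LocallyDense G ρ d) (hρ : 0 ≤ ρ) (hd : 0 ≤ d) (k : ℕ)
    (X : Finset β) :
    d ^ k * ((#X : ℝ) ^ (k + 1) - ρ * Fintype.card β * (#X : ℝ) ^ k) ≤
      ∑ v ∈ X, (#{w ∈ X | G.Adj v w} : ℝ) ^ k := by
  rcases lt_or_ge (#X : ℝ) (ρ * Fintype.card β) with small | large
  · calc d ^ k * ((#X : ℝ) ^ (k + 1) - ρ * Fintype.card β * (#X : ℝ) ^ k)
        = d ^ k * (#X : ℝ) ^ k * (#X - ρ * Fintype.card β) := by ring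
      _ ≤ 0 := mul_nonpos_of_nonneg_of_nonpos (by positivity) (by linarith)
      _ ≤ _ := by positivity
  have power_mean : d ^ k * (#X : ℝ) ^ (k + 1) ≤ ∑ v ∈ X, (#{w ∈ X | G.Adj v w} : ℝ) ^ k := by
    rcases X.eq_empty_or_nonempty with rfl | hX
    · simp
    have : (0 : ℝ) < #X := by exact_mod_cast hX.card_pos
    rcases k with _ | k
    · simp
    calc d ^ (k + 1) * (#X : ℝ) ^ (k + 1 + 1)
        = (d * (#X : ℝ) ^ 2) ^ (k + 1) / (#X : ℝ) ^ k := by field_simp; ring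
      _ ≤ (∑ v ∈ X, (#{w ∈ X | G.Adj v w} : ℝ)) ^ (k + 1) / (#X : ℝ) ^ k := by
          gcongr; exact hG.mul_card_sq_le_sum_card large
      _ ≤ ∑ v ∈ X, (#{w ∈ X | G.Adj v w} : ℝ) ^ (k + 1) :=
          pow_sum_div_card_le_sum_pow (fun _ _ => Nat.cast_nonneg _) k
  have error_nonneg : 0 ≤ d ^ k * (ρ * Fintype.card β * (#X : ℝ) ^ k) := by positivity
  linarith

theorem mul_sub_le_homCount_indepJoin (hG : LocallyDense G ρ d) (hρ : 0 ≤ ρ) (hd : 0 ≤ d)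
    [Finite α] (H : SimpleGraph α) (k : ℕ) :
    d ^ k * (homCount (indepJoin H (k + 1)) G -
        ρ * Fintype.card β * homCount (indepJoin H k) G) ≤
      homCount (indepJoin (indepJoin H k) 1) G := by
  have := Fintype.ofFinite (H →g G)
  simp only [homCount_indepJoin_indepJoin_one, homCount_indepJoin H, mul_sum, ← sum_sub_distrib]
  exact sum_le_sum fun φ _ => hG.mul_sub_le_sum_card_pow hρ hd k (commonNbrs G φ)

theorem mul_homCount_indepJoin_indepJoin_le (hG : LocallyDense G ρ d) (hρ : 0 ≤ ρ) (hd : 0 ≤ d)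
    [Finite α] {H : SimpleGraph α} {c : ℝ}
    (hc : c * homCount H G ≤ homCount (indepJoin H 1) G) (k : ℕ) :
    d ^ k * (c - ρ * Fintype.card β) * homCount (indepJoin H k) G ≤
      homCount (indepJoin (indepJoin H k) 1) G := by
  have extend := mul_homCount_indepJoin_le hc k
  calc d ^ k * (c - ρ * Fintype.card β) * homCount (indepJoin H k) G
      = d ^ k * (c * homCount (indepJoin H k) G -
          ρ * Fintype.card β * homCount (indepJoin H k) G) := by ring
    _ ≤ d ^ k * (homCount (indepJoin H (k + 1)) G -
          ρ * Fintype.card β * homCount (indepJoin H k) G) := by gcongr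
    _ ≤ homCount (indepJoin (indepJoin H k) 1) G := hG.mul_sub_le_homCount_indepJoin hρ hd H k

end LocallyDense

section CompleteMultipartite

variable {ι : Type*}

/-- The complete multipartite graph `K(r₁, …, r_ℓ)`, for an arbitrary index type of the parts. -/
abbrev multipartite (r : ι → ℕ) : SimpleGraph (Σ i, Fin (r i)) :=
  SimpleGraph.completeMultipartiteGraph fun i => Fin (r i)

theorem nonempty_indepJoin_multipartite_iso (r : ι → ℕ) (i : ι) :
    Nonempty (indepJoin (multipartite fun j : {j // j ≠ i} => r j) (r i) ≃g multipartite r) := by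
  let f : ((Σ j : {j // j ≠ i}, Fin (r j)) ⊕ Fin (r i)) → Σ j, Fin (r j) :=
    Sum.elim (fun p => ⟨p.1, p.2⟩) (fun x => ⟨i, x⟩)
  have f_bijective : Bijective f := by
    constructor
    · rintro (⟨⟨j, hj⟩, x⟩ | x) (⟨⟨j', hj'⟩, x'⟩ | x') h
      all_goals simp only [f, Sum.elim_inl, Sum.elim_inr, Sigma.mk.injEq] at h
      · obtain ⟨rfl, h⟩ := h
        rw [eq_of_heq h]
      · exact absurd h.1 hj
      · exact absurd h.1.symm hj'
      · rw [eq_of_heq h.2]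
    · rintro ⟨j, x⟩
      by_cases hj : j = i
      · subst hj
        exact ⟨.inr x, rfl⟩
      · exact ⟨.inl ⟨⟨j, hj⟩, x⟩, rfl⟩
  refine ⟨⟨Equiv.ofBijective f f_bijective, ?_⟩⟩
  rintro (⟨⟨j, hj⟩, x⟩ | x) (⟨⟨j', hj'⟩, x'⟩ | x')
  · simp [f]
  · simp [f, hj]
  · simp [f, Ne.symm hj']
  · simp [f]

theorem nonempty_indepJoin_multipartite_iso_update [DecidableEq ι] (r : ι → ℕ) (i : ι) (k : ℕ) :
    Nonempty (indepJoin (multipartite fun j : {j // j ≠ i} => r j) k ≃g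
      multipartite (update r i k)) := by
  have off_part : (fun j : {j // j ≠ i} => r j) = fun j : {j // j ≠ i} => update r i k j :=
    funext fun j => (update_of_ne j.2 k r).symm
  suffices ∀ r' : {j // j ≠ i} → ℕ, (r' = fun j : {j // j ≠ i} => update r i k j) →
      Nonempty (indepJoin (multipartite r') k ≃g multipartite (update r i k)) from
    this _ off_part
  rintro _ rfl
  have iso := nonempty_indepJoin_multipartite_iso (update r i k) i
  rwa [update_self] at iso

variable [Fintype ι] {β : Type*} [Fintype β] {G : SimpleGraph β} {ρ d : ℝ}

theorem LocallyDense.pow_sub_mul_homCount_multipartite_le (hG : LocallyDense G ρ d) (hρ : 0 ≤ ρ)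
    (hd : 0 ≤ d) (hd1 : d ≤ 1) (r : ι → ℕ) :
    (d ^ (∑ i, r i) - Fintype.card ι * ρ) * Fintype.card β * homCount (multipartite r) G ≤
      homCount (indepJoin (multipartite r) 1) G := by
  classical
  induction h : Fintype.card ι generalizing ι with
  | zero =>
    have := Fintype.card_eq_zero_iff.1 h
    simp [homCount_indepJoin_one_of_isEmpty]
  | succ m ih =>
    obtain ⟨i⟩ : Nonempty ι := Fintype.card_pos_iff.1 (by omega)
    obtain ⟨iso⟩ := nonempty_indepJoin_multipartite_iso r i
    have without_part := ih (fun j : {j // j ≠ i} => r j) (by simp [h])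
    have with_part := hG.mul_homCount_indepJoin_indepJoin_le hρ hd without_part (r i)
    rw [homCount_congr iso, homCount_congr (indepJoinCongr iso 1)] at with_part
    refine le_trans (mul_le_mul_of_nonneg_right ?_ (homCount_nonneg _ _)) with_part
    have error_le : d ^ r i * ((m + 1) * ρ * Fintype.card β) ≤ (m + 1) * ρ * Fintype.card β :=
      mul_le_of_le_one_left (by positivity) (pow_le_one₀ hd hd1)
    rw [Fintype.sum_eq_add_sum_subtype_ne r i, pow_add]
    push_cast
    linarith

theorem edgeCount_multipartite_update [DecidableEq ι] (r : ι → ℕ) (i : ι) :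
    edgeCount (multipartite (update r i (r i + 1))) =
      edgeCount (multipartite r) + ∑ j : {j // j ≠ i}, r j := by
  obtain ⟨iso⟩ := nonempty_indepJoin_multipartite_iso r i
  obtain ⟨iso_update⟩ := nonempty_indepJoin_multipartite_iso_update r i (r i + 1)
  rw [← edgeCount_congr iso, ← edgeCount_congr iso_update, edgeCount_indepJoin,
    edgeCount_indepJoin, Fintype.card_sigma]
  simp only [Fintype.card_fin]
  ring

theorem edgeCount_multipartite_mono {ι : Type*} [Finite ι] :
    Monotone fun r : ι → ℕ => edgeCount (multipartite r) := by
  classical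
  have := Fintype.ofFinite ι
  refine (monotone_iff_forall_covBy _).2 fun s r h => ?_
  obtain ⟨i, rfl⟩ := exists_eq_update_add_one_of_covBy h
  simp only [edgeCount_multipartite_update, Nat.le_add_right]

variable [Nonempty β]

theorem homDensity_multipartite_anti (G : SimpleGraph β) :
    Antitone fun r : ι → ℕ => homDensity (multipartite r) G := by
  classical
  refine (antitone_iff_forall_covBy _).2 fun s r h => ?_
  obtain ⟨i, rfl⟩ := exists_eq_update_add_one_of_covBy h
  obtain ⟨iso⟩ := nonempty_indepJoin_multipartite_iso s i
  obtain ⟨iso_update⟩ := nonempty_indepJoin_multipartite_iso_update s i (s i + 1)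
  simp only [← homDensity_congr iso, ← homDensity_congr iso_update]
  exact homDensity_indepJoin_succ_le _ _ G

theorem LocallyDense.pow_sub_mul_homDensity_le_update [DecidableEq ι] (hG : LocallyDense G ρ d)
    (hρ : 0 ≤ ρ) (hd : 0 ≤ d) (hd1 : d ≤ 1) (r : ι → ℕ) (i : ι) :
    (d ^ (∑ j : {j // j ≠ i}, r j) - Fintype.card ι * ρ) * homDensity (multipartite r) G ≤
      homDensity (multipartite (update r i (r i + 1))) G := by
  obtain ⟨iso⟩ := nonempty_indepJoin_multipartite_iso r i
  obtain ⟨iso_update⟩ := nonempty_indepJoin_multipartite_iso_update r i (r i + 1)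
  have extend := mul_homDensity_indepJoin_le
    (hG.pow_sub_mul_homCount_multipartite_le hρ hd hd1 fun j : {j // j ≠ i} => r j) (r i)
  rw [homDensity_congr iso, homDensity_congr iso_update] at extend
  refine le_trans ?_ extend
  gcongr
  · exact homDensity_nonneg _ _
  · exact Fintype.card_subtype_le _

end CompleteMultipartite

theorem stmt12_general {ι β : Type*} [Fintype ι] [Fintype β] [Nonempty β] {G : SimpleGraph β}
    {ρ d : ℝ} (hG : LocallyDense G ρ d) (hρ : 0 ≤ ρ) (hd : 0 ≤ d) (hd1 : d ≤ 1) {s r : ι → ℕ}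
    (hrs : s ≤ r) :
    (d ^ (edgeCount (multipartite r) - edgeCount (multipartite s)) -
        Fintype.card ι * ρ * ∑ i, ((r i : ℝ) - s i)) * homDensity (multipartite s) G ≤
      homDensity (multipartite r) G := by
  classical
  induction le_iff_reflTransGen_covBy.1 hrs with
  | refl => simp
  | @tail r _ hsr hrr' ih =>
    replace hsr := le_iff_reflTransGen_covBy.2 hsr
    obtain ⟨i, rfl⟩ := exists_eq_update_add_one_of_covBy hrr'
    have extend := hG.pow_sub_mul_homDensity_le_update hρ hd hd1 r i
    have exponent : edgeCount (multipartite (update r i (r i + 1))) - edgeCount (multipartite s) =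
        edgeCount (multipartite r) - edgeCount (multipartite s) + ∑ j : {j // j ≠ i}, r j := by
      rw [edgeCount_multipartite_update, Nat.sub_add_comm (edgeCount_multipartite_mono hsr)]
    have size_diff_nonneg : 0 ≤ ∑ j, ((r j : ℝ) - s j) :=
      sum_nonneg fun j _ => sub_nonneg.2 (Nat.cast_le.2 (hsr j))
    rw [exponent, sum_update_add_one_sub, pow_add, mul_add, mul_one]
    exact mul_sub_add_mul_le_of_le_of_le (by positivity) (pow_le_one₀ hd hd1) (by positivity)
      (by positivity) (homDensity_nonneg _ _) (homDensity_multipartite_anti G hsr) (ih hsr) extend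

theorem stmt12 (δ : ℝ) (hδ : 0 < δ) (ℓ : ℕ) (hℓ : 0 < ℓ) (r s : Fin ℓ → ℕ)
    (hrs : ∀ i, s i ≤ r i) :
    ∃ (ρ : ℝ) (n₀ : ℕ), 0 < ρ ∧
      ∀ (d : ℝ), 0 < d → d ≤ 1 →
        ∀ (β : Type) [Fintype β] (G : SimpleGraph β),
          n₀ ≤ Fintype.card β → LocallyDense G ρ d →
            homDensity
                (SimpleGraph.completeMultipartiteGraph (fun i : Fin ℓ => Fin (r i))) G
              ≥ (d ^ (edgeCount
                    (SimpleGraph.completeMultipartiteGraph (fun i : Fin ℓ => Fin (r i))) -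
                  edgeCount
                    (SimpleGraph.completeMultipartiteGraph (fun i : Fin ℓ => Fin (s i)))) - δ) *
                homDensity
                  (SimpleGraph.completeMultipartiteGraph (fun i : Fin ℓ => Fin (s i))) G := by
  obtain ⟨ρ, hρ, hρδ⟩ := exists_pos_mul_lt hδ ((∑ i, ((r i : ℝ) - s i)) * ℓ)
  refine ⟨ρ, 1, hρ, fun d hd hd1 β _ G hn hG => ?_⟩
  have := Fintype.card_pos_iff.1 hn
  refine le_trans ?_ (stmt12_general hG hρ.le hd.le hd1 hrs)
  gcongr
  · exact homDensity_nonneg _ _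
  · rw [Fintype.card_fin]
    linarith
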